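/- Let E be a non-reflexive Banach space. Then the evaluation map from E × ℝ (with the ℓ∞ norm, ordered by the cone {(x,λ) : ‖x‖ ≤ λ}) into the space of Scott-continuous states on its dual order-unit space OU(E*) is not surjective: there exists a Scott-continuous state on OU(E*) that does not equal ev(x,λ) ∘ lev for any (x,λ) ∈ E × ℝ. -/

import Mathlib

/-- The order on `OU(E*) = E* × ℝ` induced by the cone `{(y,μ) : ‖y‖ ≤ μ}`. -/
def OUle {E : Type*} [NormedAddCommGroup E] [NormedSpace ℝ E]
    (a b : (E →L[ℝ] ℝ) × ℝ) : Prop := ‖b.1 - a.1‖ ≤ b.2 - a.2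

/-- For a non-reflexive Banach space `E`, there is a Scott-continuous state on
`OU(E*) = E* × ℝ` (ordered by the cone `{(y,μ) : ‖y‖ ≤ μ}`, with unit `(0,1)`) that
is not of the form `ev(x,λ) ∘ lev` for any `(x,λ) ∈ E × ℝ`, where
`(ev(x,λ) ∘ lev)(y,μ) = y(x) + λμ`. -/
theorem stmt_18 {E : Type*} [NormedAddCommGroup E] [NormedSpace ℝ E] [CompleteSpace E]
    (hnonrefl : ¬ Function.Surjective (NormedSpace.inclusionInDoubleDual ℝ E)) :
    ∃ φ : ((E →L[ℝ] ℝ) × ℝ) →ₗ[ℝ] ℝ,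
      (∀ a : (E →L[ℝ] ℝ) × ℝ, ‖a.1‖ ≤ a.2 → 0 ≤ φ a) ∧
      (φ ((0 : E →L[ℝ] ℝ), (1 : ℝ)) = 1) ∧
      (∀ D : Set ((E →L[ℝ] ℝ) × ℝ), D.Nonempty →
        (∀ a ∈ D, ∀ b ∈ D, ∃ c ∈ D, OUle a c ∧ OUle b c) →
        ∀ s : (E →L[ℝ] ℝ) × ℝ, (∀ a ∈ D, OUle a s) →
          (∀ b : (E →L[ℝ] ℝ) × ℝ, (∀ a ∈ D, OUle a b) → OUle s b) →
          sSup (φ '' D) = φ s) ∧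
      (∀ (x : E) (l : ℝ), ∃ p : (E →L[ℝ] ℝ) × ℝ, φ p ≠ p.1 x + l * p.2) := by
  obtain ⟨ψ, hψ⟩ : ∃ ψ : (E →L[ℝ] ℝ) →L[ℝ] ℝ,
      ∀ x, NormedSpace.inclusionInDoubleDual ℝ E x ≠ ψ := by
    by_contra h
    push Not at h
    exact hnonrefl h
  have hN : 0 < ‖ψ‖ + 1 := by positivity
  have hb : ∀ y : E →L[ℝ] ℝ, |(‖ψ‖ + 1)⁻¹ * ψ y| ≤ ‖y‖ := by
    intro y
    have h1 := ψ.le_opNorm y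
    rw [Real.norm_eq_abs] at h1
    rw [abs_mul, abs_of_pos (inv_pos.mpr hN), inv_mul_le_iff₀ hN]
    nlinarith [norm_nonneg y]
  let φ : ((E →L[ℝ] ℝ) × ℝ) →ₗ[ℝ] ℝ :=
    (‖ψ‖ + 1)⁻¹ • (ψ.toLinearMap.comp (LinearMap.fst ℝ _ _)) + LinearMap.snd ℝ _ _
  have hφ : ∀ a, φ a = (‖ψ‖ + 1)⁻¹ * ψ a.1 + a.2 := fun a => rfl
  have hpos : ∀ a : (E →L[ℝ] ℝ) × ℝ, ‖a.1‖ ≤ a.2 → 0 ≤ φ a := by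
    intro a ha
    rw [hφ]
    have := (abs_le.mp (hb a.1)).1
    linarith
  have hmono : ∀ a b : (E →L[ℝ] ℝ) × ℝ, OUle a b → φ a ≤ φ b := by
    intro a b hab
    have := hpos (b - a) hab
    rw [map_sub] at this
    linarith
  refine ⟨φ, hpos, ?_, ?_, ?_⟩
  · rw [hφ]; simp
  · intro D hne hdir s hs hlub
    have hbdd : BddAbove (Prod.snd '' D) := by
      refine ⟨s.2, ?_⟩
      rintro _ ⟨a, ha, rfl⟩
      have h1 : ‖s.1 - a.1‖ ≤ s.2 - a.2 := hs a ha
      linarith [norm_nonneg (s.1 - a.1)]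
    have hφb : BddAbove (φ '' D) := by
      refine ⟨φ s, ?_⟩
      rintro _ ⟨a, ha, rfl⟩
      exact hmono _ _ (hs a ha)
    apply le_antisymm
    · apply csSup_le (hne.image _)
      rintro _ ⟨a, ha, rfl⟩
      exact hmono _ _ (hs a ha)
    · apply le_of_forall_pos_le_add
      intro ε hε
      obtain ⟨_, ⟨a, ha, rfl⟩, hlt⟩ := exists_lt_of_lt_csSup (hne.image Prod.snd)
        (show sSup (Prod.snd '' D) - ε / 2 < sSup (Prod.snd '' D) by linarith)
      have hup : OUle s (a.1, a.2 + ε) := by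
        apply hlub
        intro d hd
        obtain ⟨c, hc, hac, hdc⟩ := hdir a ha d hd
        have hc2 : c.2 ≤ sSup (Prod.snd '' D) := le_csSup hbdd ⟨c, hc, rfl⟩
        have h1 : ‖c.1 - a.1‖ ≤ c.2 - a.2 := hac
        have h2 : ‖c.1 - d.1‖ ≤ c.2 - d.2 := hdc
        change ‖a.1 - d.1‖ ≤ a.2 + ε - d.2
        have h3 : ‖a.1 - d.1‖ ≤ ‖c.1 - d.1‖ + ‖c.1 - a.1‖ := by
          have := norm_sub_le (c.1 - d.1) (c.1 - a.1)
          rwa [sub_sub_sub_cancel_left] at this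
        linarith
      have h4 := hmono _ _ hup
      have h5 : φ a ≤ sSup (φ '' D) := le_csSup hφb ⟨a, ha, rfl⟩
      rw [hφ a] at h5
      rw [hφ (a.1, a.2 + ε)] at h4
      dsimp only at h4
      linarith
  · intro x l
    by_contra h
    push Not at h
    apply hψ ((‖ψ‖ + 1) • x)
    ext y
    have h1 := h (y, 0)
    rw [hφ] at h1
    simp only [add_zero, mul_zero] at h1
    rw [NormedSpace.dual_def, map_smul, smul_eq_mul, ← h1]
    field_simp
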